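/- arXiv:2309.04603 — 8 statements merged into one kernel-verified Lean document; each statement's English description precedes it below -/
import Mathlib

section
/- There exists a 5-uniform hypergraph H on 8 vertices such that H has no polychromatic 3-coloring, but every 3-heavy restricted subhypergraph of H is 2-colorable. -/
/-!
The edges are the complements of the blocks of a family `T` of 12 triples that covers all pairs of
an 8-element set `V`. Of three colors, one is used at most twice on `V`, so its color class lies in
a block and is missed by the complement of that block.

The trace of `V \ t` on `X ⊆ V` is `X \ t`. As in the classical bound for Property B, a family of
subsets of a 6-element set, all with at least 3 points and fewer than 10 with exactly 3, is
2-colorable: each 3-point member spoils one of the 10 balanced bisections, a larger one spoils none.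
So it is enough to find few blocks `t` with `X \ t` of size 3. If `X` has 6 points, these blocks
avoid the points outside `X`, and every point lies in at least 4 blocks. If `X` has 5 points, they
are the blocks meeting `Z = V \ X` in exactly one point. The three pairs in `Z` lie in three
different blocks unless `Z` is itself a block, and `T` is chosen so that every block meets at least
three blocks, itself included, in a number of points different from one.
If `X` has at most 4 points, it has at most 4 subsets of size 3. If `X` has more than 6 points, a
coloring that works for a 6-point subset works for `X`.
-/

open Finset

section TwoColoring

variable {α : Type*} {A W f g : Finset α} {F G : Finset (Finset α)}

/-- The bipartition of the vertices into `A` and its complement is a proper 2-coloring of the edge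
`f`, that is, `f` meets both parts. -/
def Splits (A f : Finset α) : Prop :=
  (∃ v ∈ f, v ∈ A) ∧ ∃ v ∈ f, v ∉ A

/-- 2-colorability of the hypergraph with edge set `F`. A coloring is encoded by one of its color
classes. -/
def IsTwoColorable (F : Finset (Finset α)) : Prop :=
  ∃ A : Finset α, ∀ f ∈ F, Splits A f

lemma Splits.mono (h : Splits A f) (hfg : f ⊆ g) : Splits A g := by
  obtain ⟨⟨v, hv, hvA⟩, w, hw, hwA⟩ := h
  exact ⟨⟨v, hfg hv, hvA⟩, w, hfg hw, hwA⟩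

lemma IsTwoColorable.of_forall_exists_subset (hG : IsTwoColorable G)
    (hFG : ∀ f ∈ F, ∃ g ∈ G, g ⊆ f) : IsTwoColorable F := by
  obtain ⟨A, hA⟩ := hG
  refine ⟨A, fun f hf => ?_⟩
  obtain ⟨g, hg, hgf⟩ := hFG f hf
  exact (hA g hg).mono hgf

lemma IsTwoColorable.exists_bool_coloring (hF : IsTwoColorable F) :
    ∃ c : α → Bool, ∀ f ∈ F, (∃ v ∈ f, c v = true) ∧ (∃ v ∈ f, c v = false) := by
  classical
  obtain ⟨A, hA⟩ := hF
  refine ⟨fun v => decide (v ∈ A), fun f hf => ?_⟩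
  simpa only [decide_eq_true_eq, decide_eq_false_iff_not, Splits] using hA f hf

lemma eq_or_eq_sdiff_of_not_splits [DecidableEq α] (hfW : f ⊆ W) (hA : #A ≤ #f)
    (hWA : #(W \ A) ≤ #f) (h : ¬ Splits A f) : f = A ∨ f = W \ A := by
  rw [Splits, not_and_or] at h
  push Not at h
  rcases h with disjoint | subset
  · exact .inr (eq_of_subset_of_card_le
      (fun v hv => mem_sdiff.mpr ⟨hfW hv, disjoint v hv⟩) hWA)
  · exact .inl (eq_of_subset_of_card_le subset hA)

theorem isTwoColorable_filter_of_two_mul_card_lt_centralBinom {m : ℕ} (hW : #W = 2 * m)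
    (hF : ∀ f ∈ F, f ⊆ W) (hlt : 2 * #{f ∈ F | #f = m} < m.centralBinom) :
    IsTwoColorable {f ∈ F | m ≤ #f} := by
  classical
  set M := {f ∈ F | #f = m}
  have spoiled_lt : #(M ∪ M.image (W \ ·)) < #(W.powersetCard m) := by
    rw [card_powersetCard, hW, ← Nat.centralBinom_eq_two_mul_choose]
    have := card_union_le M (M.image (W \ ·))
    have := card_image_le (s := M) (f := (W \ ·))
    omega
  obtain ⟨A, hA, hAM⟩ := exists_mem_notMem_of_card_lt_card spoiled_lt
  obtain ⟨hAW, hAm⟩ := mem_powersetCard.mp hA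
  have hWA : #(W \ A) = m := by rw [card_sdiff_of_subset hAW]; omega
  refine ⟨A, fun f hf => by_contra fun hsplit => hAM ?_⟩
  obtain ⟨hfF, hfm⟩ := mem_filter.mp hf
  rw [mem_union, mem_image]
  rcases eq_or_eq_sdiff_of_not_splits (hF f hfF) (hAm.trans_le hfm) (hWA.trans_le hfm) hsplit with
    rfl | rfl
  · exact .inl (mem_filter.mpr ⟨hfF, hAm⟩)
  · exact .inr ⟨W \ A, mem_filter.mpr ⟨hfF, hWA⟩, Finset.sdiff_sdiff_eq_self hAW⟩

end TwoColoring

section CoveringDesign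

variable {α : Type*} {V X Z S t : Finset α} {T : Finset (Finset α)} {k s : ℕ}

/-- `T` is a covering design on `V` with block size `k` and strength `s`: its blocks are `k`-subsets
of `V`, and every `s`-subset of `V` lies in a block. -/
structure IsCoveringDesign (V : Finset α) (T : Finset (Finset α)) (k s : ℕ) : Prop where
  subset_powersetCard : T ⊆ V.powersetCard k
  exists_superset : ∀ S ∈ V.powersetCard s, ∃ t ∈ T, S ⊆ t

namespace IsCoveringDesign

lemma subset_of_mem (hT : IsCoveringDesign V T k s) (ht : t ∈ T) : t ⊆ V :=
  (mem_powersetCard.mp (hT.subset_powersetCard ht)).1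

lemma card_of_mem (hT : IsCoveringDesign V T k s) (ht : t ∈ T) : #t = k :=
  (mem_powersetCard.mp (hT.subset_powersetCard ht)).2

lemma exists_superset_of_card_le (hT : IsCoveringDesign V T k s) (hs : s ≤ #V) (hSV : S ⊆ V)
    (hS : #S ≤ s) : ∃ t ∈ T, S ⊆ t := by
  obtain ⟨R, hSR, hRV, hR⟩ := exists_subsuperset_card_eq hSV hS hs
  obtain ⟨t, ht, hRt⟩ := hT.exists_superset R (mem_powersetCard.mpr ⟨hRV, hR⟩)
  exact ⟨t, ht, hSR.trans hRt⟩

end IsCoveringDesign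

variable [DecidableEq α]

/-- The edge set of the hypergraph on `V` whose edges are the complements of the blocks in `T`. -/
def complEdges (V : Finset α) (T : Finset (Finset α)) : Finset (Finset α) :=
  T.image (V \ ·)

lemma image_inter_complEdges (hXV : X ⊆ V) :
    (complEdges V T).image (· ∩ X) = T.image (X \ ·) := by
  simp only [complEdges, image_image, Function.comp_def, sdiff_inter_right_comm,
    inter_eq_right.mpr hXV]

namespace IsCoveringDesign

lemma subset_and_card_of_mem_complEdges (hT : IsCoveringDesign V T k s) :
    ∀ e ∈ complEdges V T, e ⊆ V ∧ #e = #V - k := by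
  refine forall_mem_image.mpr fun t ht => ⟨sdiff_subset, ?_⟩
  rw [card_sdiff_of_subset (hT.subset_of_mem ht), hT.card_of_mem ht]

theorem not_exists_polychromatic {κ : Type*} [Fintype κ]
    (hT : IsCoveringDesign V T k s) (hs : s ≤ #V) (hV : #V < Fintype.card κ * (s + 1)) :
    ¬ ∃ c : α → κ, ∀ e ∈ complEdges V T, ∀ i, ∃ v ∈ e, c v = i := by
  classical
  rintro ⟨c, hc⟩
  obtain ⟨i, -, hi⟩ := exists_card_fiber_lt_of_card_lt_mul (s := V) (t := univ) (f := c) hV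
  obtain ⟨t, ht, hfiber⟩ :=
    hT.exists_superset_of_card_le hs (filter_subset (c · = i) V) (Nat.lt_succ_iff.mp hi)
  obtain ⟨v, hv, hvi⟩ := hc (V \ t) (mem_image_of_mem _ ht) i
  obtain ⟨hvV, hvt⟩ := mem_sdiff.mp hv
  exact hvt (hfiber (mem_filter.mpr ⟨hvV, hvi⟩))

lemma card_erase_le_card_filter_mem_mul (hT : IsCoveringDesign V T k 2) {p : α} (hp : p ∈ V) :
    #(V.erase p) ≤ #{t ∈ T | p ∈ t} * (k - 1) := by
  have covered : V.erase p ⊆ {t ∈ T | p ∈ t}.biUnion (·.erase p) := fun q hq => by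
    obtain ⟨hqp, hqV⟩ := mem_erase.mp hq
    obtain ⟨t, ht, hpqt⟩ := hT.exists_superset {p, q}
      (mem_powersetCard.mpr ⟨by simp [insert_subset_iff, hp, hqV], card_pair hqp.symm⟩)
    obtain ⟨hpt, hqt⟩ : p ∈ t ∧ q ∈ t := by simpa [insert_subset_iff] using hpqt
    exact mem_biUnion.mpr ⟨t, mem_filter.mpr ⟨ht, hpt⟩, mem_erase.mpr ⟨hqp, hqt⟩⟩
  refine (card_le_card covered).trans (card_biUnion_le_card_mul _ _ _ fun t ht => ?_)
  obtain ⟨ht, hpt⟩ := mem_filter.mp ht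
  rw [card_erase_of_mem hpt, hT.card_of_mem ht]

lemma succ_le_card_filter_of_notMem (hT : IsCoveringDesign V T (s + 1) s)
    (hZ : Z ∈ V.powersetCard (s + 1)) (hZT : Z ∉ T) : s + 1 ≤ #{t ∈ T | s ≤ #(t ∩ Z)} := by
  obtain ⟨hZV, hZcard⟩ := mem_powersetCard.mp hZ
  have exists_block : ∀ S ∈ Z.powersetCard s, ∃ t ∈ T, S ⊆ t :=
    fun S hS => hT.exists_superset S (powersetCard_mono hZV hS)
  choose! block block_mem subset_block using exists_block
  have block_mapsTo : ∀ S ∈ Z.powersetCard s, block S ∈ {t ∈ T | s ≤ #(t ∩ Z)} := fun S hS => by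
    obtain ⟨hSZ, hScard⟩ := mem_powersetCard.mp hS
    exact mem_filter.mpr ⟨block_mem S hS,
      hScard.symm.trans_le (card_le_card (subset_inter (subset_block S hS) hSZ))⟩
  -- Two different `s`-subsets of `Z` have union `Z`, so their common block would be `Z`.
  have block_injOn : Set.InjOn block (Z.powersetCard s) := fun S hS S' hS' heq => by
    by_contra hne
    obtain ⟨hSZ, hScard⟩ := mem_powersetCard.mp hS
    obtain ⟨hSZ', hScard'⟩ := mem_powersetCard.mp hS'
    have ssubset_union : S ⊂ S ∪ S' := left_lt_sup.mpr fun hle =>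
      hne (eq_of_subset_of_card_le hle (by omega)).symm
    have union_eq : S ∪ S' = Z := eq_of_subset_of_card_le (union_subset hSZ hSZ')
      (by have := card_lt_card ssubset_union; omega)
    have subset_common : Z ⊆ block S :=
      union_eq ▸ union_subset (subset_block S hS) (heq ▸ subset_block S' hS')
    have eq_block : Z = block S := eq_of_subset_of_card_le subset_common
      (by rw [hT.card_of_mem (block_mem S hS), hZcard])
    exact hZT (eq_block ▸ block_mem S hS)
  calc s + 1 = #(Z.powersetCard s) := by simp [card_powersetCard, hZcard]
    _ ≤ #{t ∈ T | s ≤ #(t ∩ Z)} := card_le_card_of_injOn block block_mapsTo block_injOn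

lemma card_filter_card_inter_eq_one_add_three_le (hT : IsCoveringDesign V T 3 2)
    (hmeet : ∀ Z ∈ T, 3 ≤ #{t ∈ T | #(t ∩ Z) ≠ 1}) (hZ : Z ∈ V.powersetCard 3) :
    #{t ∈ T | #(t ∩ Z) = 1} + 3 ≤ #T := by
  have three_le : 3 ≤ #{t ∈ T | #(t ∩ Z) ≠ 1} := by
    by_cases hZT : Z ∈ T
    · exact hmeet Z hZT
    · exact (hT.succ_le_card_filter_of_notMem hZ hZT).trans
        (card_le_card (monotone_filter_right T fun t _ ht => by omega))
  rw [← card_filter_add_card_filter_not (s := T) (fun t => #(t ∩ Z) = 1)]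
  exact Nat.add_le_add_left three_le _

lemma card_sdiff_add_eq (hT : IsCoveringDesign V T k s) (ht : t ∈ T) :
    #(X \ t) + k = #X + #(t ∩ (V \ X)) := by
  rw [← hT.card_of_mem ht, card_sdiff_add_card, ← inter_sdiff_assoc,
    inter_eq_left.mpr (hT.subset_of_mem ht), add_comm, card_sdiff_add_card, union_comm]

lemma card_filter_card_sdiff_lt_ten_of_card_eq_five (hT : IsCoveringDesign V T 3 2)
    (hV : #V = 8) (hcard : #T ≤ 12) (hmeet : ∀ Z ∈ T, 3 ≤ #{t ∈ T | #(t ∩ Z) ≠ 1})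
    (hXV : X ⊆ V) (hX : #X = 5) : #{t ∈ T | #(X \ t) = 3} < 10 := by
  have compl_mem : V \ X ∈ V.powersetCard 3 :=
    mem_powersetCard.mpr ⟨sdiff_subset, by rw [card_sdiff_of_subset hXV]; omega⟩
  have trace_card_iff : ∀ t ∈ T, #(X \ t) = 3 ↔ #(t ∩ (V \ X)) = 1 := fun t ht => by
    have := hT.card_sdiff_add_eq (X := X) ht
    omega
  rw [filter_congr trace_card_iff]
  have := hT.card_filter_card_inter_eq_one_add_three_le hmeet compl_mem
  omega

lemma card_filter_card_sdiff_lt_ten_of_card_eq_six (hT : IsCoveringDesign V T 3 2)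
    (hV : #V = 8) (hcard : #T ≤ 12) (hX : #X = 6) : #{t ∈ T | #(X \ t) = 3} < 10 := by
  obtain ⟨p, hpV, hpX⟩ : ∃ p ∈ V, p ∉ X := exists_mem_notMem_of_card_lt_card (by omega)
  have four_le_degree : 4 ≤ #{t ∈ T | p ∈ t} := by
    have := hT.card_erase_le_card_filter_mem_mul hpV
    rw [card_erase_of_mem hpV] at this
    omega
  have avoids_p : ∀ t ∈ T, #(X \ t) = 3 → p ∉ t := fun t ht htX hpt => by
    have := hT.card_sdiff_add_eq (X := X) ht
    have : 0 < #(t ∩ (V \ X)) := card_pos.mpr ⟨p, by simp [hpt, hpV, hpX]⟩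
    omega
  have := card_le_card (monotone_filter_right T avoids_p)
  have := card_filter_add_card_filter_not (s := T) (p ∈ ·)
  omega

lemma card_filter_image_sdiff_lt_ten (hT : IsCoveringDesign V T 3 2) (hV : #V = 8)
    (hcard : #T ≤ 12) (hmeet : ∀ Z ∈ T, 3 ≤ #{t ∈ T | #(t ∩ Z) ≠ 1}) (hXV : X ⊆ V)
    (hX : #X ≤ 6) : #{f ∈ T.image (X \ ·) | #f = 3} < 10 := by
  have traces_le_blocks : #{f ∈ T.image (X \ ·) | #f = 3} ≤ #{t ∈ T | #(X \ t) = 3} := by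
    rw [filter_image]
    exact card_image_le
  obtain small | five | six : #X ≤ 4 ∨ #X = 5 ∨ #X = 6 := by omega
  · have traces_subset : {f ∈ T.image (X \ ·) | #f = 3} ⊆ X.powersetCard 3 := fun f hf => by
      obtain ⟨hfT, hf3⟩ := mem_filter.mp hf
      obtain ⟨t, -, rfl⟩ := mem_image.mp hfT
      exact mem_powersetCard.mpr ⟨sdiff_subset, hf3⟩
    calc #{f ∈ T.image (X \ ·) | #f = 3} ≤ (#X).choose 3 :=
          card_powersetCard 3 X ▸ card_le_card traces_subset
      _ ≤ Nat.choose 4 3 := Nat.choose_le_choose 3 small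
      _ < 10 := by decide
  · exact traces_le_blocks.trans_lt
      (hT.card_filter_card_sdiff_lt_ten_of_card_eq_five hV hcard hmeet hXV five)
  · exact traces_le_blocks.trans_lt (hT.card_filter_card_sdiff_lt_ten_of_card_eq_six hV hcard six)

lemma isTwoColorable_heavy_image_sdiff_of_card_le_six (hT : IsCoveringDesign V T 3 2)
    (hV : #V = 8) (hcard : #T ≤ 12) (hmeet : ∀ Z ∈ T, 3 ≤ #{t ∈ T | #(t ∩ Z) ≠ 1})
    (hXV : X ⊆ V) (hX : #X ≤ 6) : IsTwoColorable {f ∈ T.image (X \ ·) | 3 ≤ #f} := by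
  obtain ⟨W, hXW, -, hW⟩ := exists_subsuperset_card_eq hXV hX (by omega : 6 ≤ #V)
  refine isTwoColorable_filter_of_two_mul_card_lt_centralBinom (m := 3) hW
    (forall_mem_image.mpr fun t _ => sdiff_subset.trans hXW) ?_
  have := hT.card_filter_image_sdiff_lt_ten hV hcard hmeet hXV hX
  have : Nat.centralBinom 3 = 20 := by decide
  omega

theorem isTwoColorable_heavy_image_sdiff (hT : IsCoveringDesign V T 3 2)
    (hV : #V = 8) (hcard : #T ≤ 12) (hmeet : ∀ Z ∈ T, 3 ≤ #{t ∈ T | #(t ∩ Z) ≠ 1})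
    (hXV : X ⊆ V) : IsTwoColorable {f ∈ T.image (X \ ·) | 3 ≤ #f} := by
  rcases le_total #X 6 with hX | hX
  · exact hT.isTwoColorable_heavy_image_sdiff_of_card_le_six hV hcard hmeet hXV hX
  obtain ⟨Y, hYX, hY⟩ := exists_subset_card_eq hX
  refine (hT.isTwoColorable_heavy_image_sdiff_of_card_le_six hV hcard hmeet
    (hYX.trans hXV) hY.le).of_forall_exists_subset fun f hf => ?_
  obtain ⟨t, ht, rfl⟩ := mem_image.mp (mem_filter.mp hf).1
  have heavy : 3 ≤ #(Y \ t) := by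
    have := hT.card_sdiff_add_eq (X := Y) ht
    omega
  exact ⟨Y \ t, mem_filter.mpr ⟨mem_image_of_mem _ ht, heavy⟩, sdiff_subset_sdiff hYX le_rfl⟩

end IsCoveringDesign

end CoveringDesign

/-- A covering of the pairs of `{0, …, 7}` by 12 triples. The first eight are the lines of the
Möbius–Kantor configuration; they cover every pair once except the antipodal pairs `{i, i + 4}`,
which the last four take care of. -/
def mobiusKantorCover : Finset (Finset ℕ) :=
  (range 8).image (fun i => {i, (i + 1) % 8, (i + 3) % 8}) ∪
    (range 4).image (fun i => {i, i + 3, i + 4})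

lemma isCoveringDesign_mobiusKantorCover : IsCoveringDesign (range 8) mobiusKantorCover 3 2 where
  subset_powersetCard := by decide
  exists_superset := by decide

lemma card_mobiusKantorCover : #mobiusKantorCover = 12 := by
  decide

lemma three_le_card_filter_card_inter_ne_one_mobiusKantorCover :
    ∀ Z ∈ mobiusKantorCover, 3 ≤ #{t ∈ mobiusKantorCover | #(t ∩ Z) ≠ 1} := by
  decide

/-- There exists a 5-uniform hypergraph on 8 vertices that has no polychromatic
3-coloring, but every 3-heavy restricted subhypergraph of it is 2-colorable. -/
theorem stmt_1 : ∃ (V : Finset ℕ) (E : Finset (Finset ℕ)),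
    V.card = 8 ∧ (∀ e ∈ E, e ⊆ V ∧ e.card = 5) ∧
    (¬ ∃ c : ℕ → Fin 3, ∀ e ∈ E, ∀ i : Fin 3, ∃ v ∈ e, c v = i) ∧
    (∀ X ⊆ V, ∀ E' ⊆ E.image (· ∩ X), (∀ f ∈ E', 3 ≤ f.card) →
      ∃ c : ℕ → Bool, ∀ f ∈ E', (∃ v ∈ f, c v = true) ∧ (∃ v ∈ f, c v = false)) := by
  have cover := isCoveringDesign_mobiusKantorCover
  have card_eight := card_range 8
  refine ⟨range 8, complEdges (range 8) mobiusKantorCover, card_eight,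
    cover.subset_and_card_of_mem_complEdges,
    cover.not_exists_polychromatic (by decide) (by decide), fun X hX E' hE' heavy => ?_⟩
  rw [image_inter_complEdges hX] at hE'
  have heavy_traces := cover.isTwoColorable_heavy_image_sdiff card_eight card_mobiusKantorCover.le
    three_le_card_filter_card_inter_ne_one_mobiusKantorCover hX
  have two_colorable : IsTwoColorable E' := heavy_traces.of_forall_exists_subset fun f hf =>
    ⟨f, mem_filter.mpr ⟨hE' hf, heavy f hf⟩, Subset.rfl⟩
  exact two_colorable.exists_bool_coloring
end

section
/- Let H be the hypergraph on vertex set V = {1,…,8} with the eleven edges {4,5,6,7,8}, {2,3,5,6,8}, {2,3,4,7,8}, {1,3,5,7,8}, {1,3,4,6,8}, {1,2,6,7,8}, {1,2,4,5,8}, {3,4,5,6,7}, {1,2,4,5,7}, {1,2,3,5,6}, {2,3,4,6,7}. Then H has no polychromatic 3-coloring: for every coloring c : V → {1,2,3} there is an edge of H that misses one of the three colors. -/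
/-!
The complements of the eleven edges are the seven lines of a Fano plane on `{1,…,7}` together with
the triples obtained by adding `8` to the pairs `12, 36, 47, 15`, which cover `{1,…,7}`. Hence any
two vertices lie together in the complement of some edge. By pigeonhole one of three colors is used
on at most two of the eight vertices, so this color is missed by some edge.
-/

/-- The vertex set `{1,…,8}` of the hypergraph from the paper. -/
def paperV : Finset ℕ := {1, 2, 3, 4, 5, 6, 7, 8}

/-- The eleven 5-element edges of the hypergraph from the paper. -/
def paperE : Finset (Finset ℕ) :=
  {{4,5,6,7,8}, {2,3,5,6,8}, {2,3,4,7,8}, {1,3,5,7,8}, {1,3,4,6,8}, {1,2,6,7,8},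
   {1,2,4,5,8}, {3,4,5,6,7}, {1,2,4,5,7}, {1,2,3,5,6}, {2,3,4,6,7}}

section Covering

variable {α : Type*} {𝓑 𝓟 : Finset (Finset α)} {V S : Finset α} {t : ℕ}

/-- The defining property of a covering design with strength `t`: every `t`-element subset of `V`
lies in some block of `𝓑`. The blocks may have any size and need not lie in `V`. -/
def CoversSubsets (𝓑 : Finset (Finset α)) (V : Finset α) (t : ℕ) : Prop :=
  ∀ S ∈ V.powersetCard t, ∃ B ∈ 𝓑, S ⊆ B

namespace CoversSubsets

theorem exists_superset_of_card_le (h𝓑 : CoversSubsets 𝓑 V t) (htV : t ≤ V.card) (hSV : S ⊆ V)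
    (hSt : S.card ≤ t) : ∃ B ∈ 𝓑, S ⊆ B := by
  obtain ⟨T, hST, hTV, hT⟩ := Finset.exists_subsuperset_card_eq hSV hSt htV
  obtain ⟨B, hB, hTB⟩ := h𝓑 T (Finset.mem_powersetCard.2 ⟨hTV, hT⟩)
  exact ⟨B, hB, hST.trans hTB⟩

variable [DecidableEq α]

theorem union_image_insert (h𝓑 : CoversSubsets 𝓑 V (t + 1)) (h𝓟 : CoversSubsets 𝓟 V t) (a : α) :
    CoversSubsets (𝓑 ∪ 𝓟.image (insert a)) (insert a V) (t + 1) := by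
  intro S hS
  obtain ⟨hSV, hSt⟩ := Finset.mem_powersetCard.1 hS
  by_cases ha : a ∈ S
  · have hS' : S.erase a ∈ V.powersetCard t :=
      Finset.mem_powersetCard.2
        ⟨Finset.subset_insert_iff.1 hSV,
          by rw [Finset.card_erase_of_mem ha, hSt, Nat.add_sub_cancel]⟩
    obtain ⟨P, hP, hSP⟩ := h𝓟 _ hS'
    exact ⟨insert a P, Finset.mem_union_right _ (Finset.mem_image_of_mem _ hP),
      Finset.subset_insert_iff.2 hSP⟩
  · have hS' : S ∈ V.powersetCard (t + 1) :=
      Finset.mem_powersetCard.2 ⟨(Finset.subset_insert_iff_of_notMem ha).1 hSV, hSt⟩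
    obtain ⟨B, hB, hSB⟩ := h𝓑 S hS'
    exact ⟨B, Finset.mem_union_left _ hB, hSB⟩

theorem exists_sdiff_missing_color {κ : Type*} [Fintype κ] (h𝓑 : CoversSubsets 𝓑 V t)
    (htV : t ≤ V.card) (hV : V.card < Fintype.card κ * (t + 1)) (c : α → κ) :
    ∃ B ∈ 𝓑, ∃ i, ∀ v ∈ V \ B, c v ≠ i := by
  classical
  obtain ⟨i, -, hi⟩ := Finset.exists_card_fiber_lt_of_card_lt_mul (f := c) hV
  obtain ⟨B, hB, hiB⟩ := h𝓑.exists_superset_of_card_le htV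
    (Finset.filter_subset (c · = i) V) (Nat.le_of_lt_succ hi)
  refine ⟨B, hB, i, fun v hv hvi => ?_⟩
  obtain ⟨hvV, hvB⟩ := Finset.mem_sdiff.1 hv
  exact hvB (hiB (Finset.mem_filter.2 ⟨hvV, hvi⟩))

end CoversSubsets

end Covering

/-- The seven lines of a Fano plane on the points `{1,…,7}`. -/
def fanoLines : Finset (Finset ℕ) :=
  {{1,2,3}, {1,4,7}, {1,5,6}, {2,4,6}, {2,5,7}, {3,4,5}, {3,6,7}}

/-- Four pairs covering `{1,…,7}`: the complements of the edges that avoid `8`, with `8` removed. -/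
def pairsWithEight : Finset (Finset ℕ) :=
  {{1,2}, {3,6}, {4,7}, {1,5}}

theorem coversSubsets_fanoLines : CoversSubsets fanoLines (Finset.Icc 1 7) 2 := by
  unfold CoversSubsets
  decide

theorem coversSubsets_pairsWithEight : CoversSubsets pairsWithEight (Finset.Icc 1 7) 1 := by
  unfold CoversSubsets
  decide

theorem paperV_eq_insert : paperV = insert 8 (Finset.Icc 1 7) := by
  decide

theorem paperE_eq_image_sdiff :
    paperE = (fanoLines ∪ pairsWithEight.image (insert 8)).image (paperV \ ·) := by
  decide

theorem coversSubsets_paperV :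
    CoversSubsets (fanoLines ∪ pairsWithEight.image (insert 8)) paperV 2 := by
  rw [paperV_eq_insert]
  exact coversSubsets_fanoLines.union_image_insert coversSubsets_pairsWithEight 8

/-- The hypergraph from the paper has no polychromatic 3-coloring: every
3-coloring of the vertices has an edge missing one of the three colors. -/
theorem stmt_2 : ∀ c : ℕ → Fin 3, ∃ e ∈ paperE, ∃ i : Fin 3, ∀ v ∈ e, c v ≠ i := by
  intro c
  obtain ⟨B, hB, hBc⟩ :=
    coversSubsets_paperV.exists_sdiff_missing_color (by decide) (by decide) c
  rw [paperE_eq_image_sdiff]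
  exact ⟨paperV \ B, Finset.mem_image_of_mem _ hB, hBc⟩
end

section
/- Let H be the hypergraph on vertex set V = {1,…,8} with the eleven edges {4,5,6,7,8}, {2,3,5,6,8}, {2,3,4,7,8}, {1,3,5,7,8}, {1,3,4,6,8}, {1,2,6,7,8}, {1,2,4,5,8}, {3,4,5,6,7}, {1,2,4,5,7}, {1,2,3,5,6}, {2,3,4,6,7}. Then every pair of distinct vertices of V is disjoint from at least one edge of H; consequently every 6-element subset of V contains an edge of H, so the independence number of H is at most 5. -/
/-!
Suppose every `k`-subset of the vertex set `V` is disjoint from some edge. If `S ⊆ V` has at least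
`|V| - k` elements, then `V \ S` lies in a `k`-subset of `V`, so some edge is disjoint from `V \ S`,
and that edge lies inside `S`. Here `|V| = 8` and `k = 2`, and the pairs are checked one by one.
-/

section MissingEdges

variable {α : Type*} {V S : Finset α} {E : Set (Finset α)} {k : ℕ}

theorem exists_edge_subset_of_card_le_card_add (hEV : ∀ e ∈ E, e ⊆ V)
    (hmiss : ∀ P ⊆ V, P.card = k → ∃ e ∈ E, Disjoint e P) (hk : k ≤ V.card)
    (hS : S ⊆ V) (hcard : V.card ≤ S.card + k) : ∃ e ∈ E, e ⊆ S := by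
  classical
  have hcompl : (V \ S).card ≤ k := by
    rw [Finset.card_sdiff_of_subset hS]
    omega
  obtain ⟨P, hVSP, hPV, hP⟩ := Finset.exists_subsuperset_card_eq Finset.sdiff_subset hcompl hk
  obtain ⟨e, he, heP⟩ := hmiss P hPV hP
  have he_compl : Disjoint e (V \ S) := heP.mono_right hVSP
  exact ⟨e, he, (disjoint_sdiff_iff_le (hEV e he) hS).mp he_compl⟩

theorem card_add_lt_card_of_forall_not_edge_subset (hEV : ∀ e ∈ E, e ⊆ V)
    (hmiss : ∀ P ⊆ V, P.card = k → ∃ e ∈ E, Disjoint e P) (hk : k ≤ V.card)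
    (hS : S ⊆ V) (hind : ∀ e ∈ E, ¬ e ⊆ S) : S.card + k < V.card := by
  by_contra! hcard
  obtain ⟨e, he, heS⟩ := exists_edge_subset_of_card_le_card_add hEV hmiss hk hS hcard
  exact hind e he heS

end MissingEdges

theorem card_paperV : paperV.card = 8 := rfl

theorem subset_paperV_of_mem_paperE : ∀ e ∈ paperE, e ⊆ paperV := by
  decide

theorem exists_mem_paperE_disjoint_pair :
    ∀ u ∈ paperV, ∀ v ∈ paperV, u ≠ v → ∃ e ∈ paperE, Disjoint e ({u, v} : Finset ℕ) := by
  decide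

theorem exists_mem_paperE_disjoint_of_card_eq_two (P : Finset ℕ) (hPV : P ⊆ paperV)
    (hP : P.card = 2) : ∃ e ∈ paperE, Disjoint e P := by
  obtain ⟨u, v, huv, rfl⟩ := Finset.card_eq_two.mp hP
  exact exists_mem_paperE_disjoint_pair u (hPV (by simp)) v (hPV (by simp)) huv

/-- In the hypergraph from the paper, every pair of distinct vertices is
disjoint from some edge; consequently every 6-element subset of the vertex set
contains an edge, so the independence number is at most 5. -/
theorem stmt_4 :
    (∀ u ∈ paperV, ∀ v ∈ paperV, u ≠ v → ∃ e ∈ paperE, Disjoint e ({u, v} : Finset ℕ)) ∧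
    (∀ S ⊆ paperV, S.card = 6 → ∃ e ∈ paperE, e ⊆ S) ∧
    (∀ S ⊆ paperV, (∀ e ∈ paperE, ¬ e ⊆ S) → S.card ≤ 5) := by
  have hk : 2 ≤ paperV.card := by simp [card_paperV]
  refine ⟨exists_mem_paperE_disjoint_pair, fun S hS hcard => ?_, fun S hS hind => ?_⟩
  · exact exists_edge_subset_of_card_le_card_add subset_paperV_of_mem_paperE
      exists_mem_paperE_disjoint_of_card_eq_two hk hS (by rw [card_paperV, hcard])
  · have hlt : S.card + 2 < paperV.card :=
      card_add_lt_card_of_forall_not_edge_subset subset_paperV_of_mem_paperE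
        exists_mem_paperE_disjoint_of_card_eq_two hk hS hind
    rw [card_paperV] at hlt
    omega
end

section
/- Let k ≥ 2 and d ≥ 1 be integers and let H = (V, E) be a finite hypergraph whose VC-dimension is at least kd − 1, i.e., H shatters some set S ⊆ V with |S| = kd − 1. Then H has a ((k−1)d)-heavy restricted subhypergraph that admits no polychromatic k-coloring; namely, the hypergraph on S whose edges are all ((k−1)d)-element subsets of S is a restricted subhypergraph of H (each such subset arises as e ∩ S for some edge e, by shattering) and it has no polychromatic k-coloring. -/
/-! A coloring of `S` with `k` colors and `|S| < k * d` uses some color fewer than `d` times.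
At least `|S| + 1 - d` vertices of `S` then avoid this color, so if `m ≤ |S| + 1 - d`, some `m` of
them form an edge of the complete `m`-uniform hypergraph on `S` that misses the color. -/

section Polychromatic

open Finset

variable {α ι : Type*}

/-- A coloring `c` of the vertices is polychromatic for the hypergraph with edge set `E` if every
edge contains a vertex of each color. Colors are the elements of `ι`, and all of `α` is colored,
including elements outside the edges, whose colors do not matter. -/
def IsPolychromatic (E : Set (Finset α)) (c : α → ι) : Prop :=
  ∀ e ∈ E, ∀ i, ∃ v ∈ e, c v = i

theorem isPolychromatic_powersetCard_iff [DecidableEq ι] {S : Finset α} {m : ℕ} {c : α → ι} :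
    IsPolychromatic (S.powersetCard m : Set (Finset α)) c ↔ ∀ i, #{v ∈ S | c v ≠ i} < m := by
  constructor
  · intro hc i
    by_contra! hm
    obtain ⟨e, he, hecard⟩ := exists_subset_card_eq hm
    have heS : e ∈ S.powersetCard m := mem_powersetCard.2 ⟨he.trans (filter_subset _ _), hecard⟩
    obtain ⟨v, hv, hvi⟩ := hc e heS i
    exact (mem_filter.1 (he hv)).2 hvi
  · intro hm e he i
    obtain ⟨heS, hecard⟩ := mem_powersetCard.1 (mem_coe.1 he)
    by_contra! hmiss
    have hsub : e ⊆ {v ∈ S | c v ≠ i} := fun v hv => mem_filter.2 ⟨heS hv, hmiss v hv⟩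
    exact (hecard ▸ card_le_card hsub).not_gt (hm i)

theorem not_isPolychromatic_powersetCard [Fintype ι] {S : Finset α} {m d : ℕ}
    (hS : #S < Fintype.card ι * d) (hm : m + d ≤ #S + 1) (c : α → ι) :
    ¬ IsPolychromatic (S.powersetCard m : Set (Finset α)) c := by
  classical
  intro hc
  obtain ⟨i, -, hi⟩ : ∃ i ∈ univ, #{v ∈ S | c v = i} < d :=
    exists_card_fiber_lt_of_card_lt_mul (by rwa [card_univ])
  have havoid : #{v ∈ S | c v ≠ i} < m := isPolychromatic_powersetCard_iff.1 hc i
  have hsplit : #{v ∈ S | c v = i} + #{v ∈ S | c v ≠ i} = #S :=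
    card_filter_add_card_filter_not _
  omega

theorem stmt_6_general {k d : ℕ} {E : Set (Set α)} {S : Finset α} (hcard : #S + 1 = k * d)
    (hshatter : ∀ B ⊆ S, ∃ e ∈ E, e ∩ S = B) :
    (∀ f ∈ S.powersetCard ((k - 1) * d), ∃ e ∈ E, e ∩ S = f) ∧
    ¬ ∃ c : α → Fin k, IsPolychromatic (S.powersetCard ((k - 1) * d) : Set (Finset α)) c := by
  refine ⟨fun f hf => hshatter f (mem_powersetCard.1 hf).1, ?_⟩
  rintro ⟨c, hc⟩
  have hk : 0 < k := Nat.pos_of_mul_pos_right (b := d) (by omega)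
  have hsize : (k - 1) * d + d = k * d := by
    rw [Nat.sub_one_mul, Nat.sub_add_cancel (Nat.le_mul_of_pos_left d hk)]
  have hcolors : #S < Fintype.card (Fin k) * d := by
    rw [Fintype.card_fin]
    omega
  exact not_isPolychromatic_powersetCard hcolors (by omega) c hc

end Polychromatic

/-- If a finite hypergraph `(V, E)` shatters a set `S` with `|S| = kd - 1`
(`k ≥ 2`, `d ≥ 1`), then the complete `((k-1)d)`-uniform hypergraph on `S` is a
restricted subhypergraph of `(V, E)` (each `((k-1)d)`-subset of `S` arises as
`e ∩ S` for some edge `e`), and it admits no polychromatic `k`-coloring. -/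
theorem stmt_6 {α : Type*} [DecidableEq α] (k d : ℕ) (hk : 2 ≤ k) (hd : 1 ≤ d)
    (V : Finset α) (E : Finset (Finset α)) (hE : ∀ e ∈ E, e ⊆ V)
    (S : Finset α) (hS : S ⊆ V) (hScard : S.card = k * d - 1)
    (hshatter : ∀ B ⊆ S, ∃ e ∈ E, e ∩ S = B) :
    (∀ f ∈ S.powersetCard ((k - 1) * d), ∃ e ∈ E, e ∩ S = f) ∧
    ¬ ∃ c : α → Fin k, ∀ e ∈ S.powersetCard ((k - 1) * d), ∀ i : Fin k, ∃ v ∈ e, c v = i := by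
  have hkd : 0 < k * d := Nat.mul_pos (by omega) hd
  have hcard : S.card + 1 = k * d := by omega
  have hshatter' : ∀ B ⊆ S, ∃ e ∈ ((↑) '' (E : Set (Finset α)) : Set (Set α)), e ∩ S = B := by
    simpa [← Finset.coe_inter] using hshatter
  simpa [IsPolychromatic, ← Finset.coe_inter] using stmt_6_general hcard hshatter'
end

section
/- Let k ≥ 2 be an integer and let H = (V, E) be a finite hypergraph that shatters a set S ⊆ V of size s, where d := ⌊(s+1)/k⌋ ≥ 1. Then H has a ((k−1)·⌊(s+1)/k⌋)-heavy restricted subhypergraph that admits no polychromatic k-coloring. -/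
/-!
Let `d = (s + 1) / k` and consider all subsets of `S` with exactly `(k - 1) * d` elements; they
are traces on `S` because `S` is shattered. In any `k`-coloring some color is used at most `s / k`
times on `S`, so at least `s - s / k ≥ (k - 1) * d` vertices of `S` avoid it. Among them one finds
an edge missing that color.
-/

theorem sub_one_mul_succ_div_le_sub_div (k s : ℕ) : (k - 1) * ((s + 1) / k) ≤ s - s / k := by
  rw [Nat.sub_one_mul]
  by_cases hdvd : k ∣ s + 1
  · have hquot : (s + 1) / k = s / k + 1 := Nat.succ_div_of_dvd hdvd
    have hmul : k * ((s + 1) / k) = s + 1 := Nat.mul_div_cancel' hdvd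
    omega
  · have hquot : (s + 1) / k = s / k := Nat.succ_div_of_not_dvd hdvd
    have hmul : k * (s / k) ≤ s := Nat.mul_div_le s k
    rw [hquot]
    exact Nat.sub_le_sub_right hmul _

section Coloring

variable {α κ : Type*} [Fintype κ] [Nonempty κ]

theorem exists_card_fiber_le_card_div_card [DecidableEq κ] (S : Finset α) (c : α → κ) :
    ∃ i, (S.filter (c · = i)).card ≤ S.card / Fintype.card κ := by
  have hlt : S.card < Finset.univ.card * (S.card / Fintype.card κ + 1) :=
    Nat.lt_mul_div_succ _ Fintype.card_pos
  obtain ⟨i, -, hi⟩ := Finset.exists_card_fiber_lt_of_card_lt_mul (f := c) hlt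
  exact ⟨i, Nat.lt_succ_iff.1 hi⟩

theorem exists_mem_powersetCard_forall_ne {m : ℕ} {S : Finset α}
    (hm : m ≤ S.card - S.card / Fintype.card κ) (c : α → κ) :
    ∃ f ∈ S.powersetCard m, ∃ i, ∀ v ∈ f, c v ≠ i := by
  classical
  obtain ⟨i, hi⟩ := exists_card_fiber_le_card_div_card S c
  have hsplit := S.card_filter_add_card_filter_not (fun v => c v = i)
  have hlarge : m ≤ (S.filter (fun v => ¬c v = i)).card := by omega
  obtain ⟨f, hf, hcard⟩ := Finset.exists_subset_card_eq hlarge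
  exact ⟨f, Finset.mem_powersetCard.2 ⟨hf.trans (Finset.filter_subset _ _), hcard⟩, i,
    fun v hv => (Finset.mem_filter.1 (hf hv)).2⟩

end Coloring

/-- If a finite hypergraph `(V, E)` shatters a set `S` of size `s` with
`⌊(s+1)/k⌋ ≥ 1` (`k ≥ 2`), then it has a `((k-1)·⌊(s+1)/k⌋)`-heavy restricted
subhypergraph (edges drawn from the trace on some `X ⊆ V`) admitting no
polychromatic `k`-coloring. -/
theorem stmt_7 {α : Type*} [DecidableEq α] (k : ℕ) (hk : 2 ≤ k)
    (V : Finset α) (E : Finset (Finset α)) (hE : ∀ e ∈ E, e ⊆ V)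
    (S : Finset α) (hS : S ⊆ V) (s : ℕ) (hScard : S.card = s)
    (hd : 1 ≤ (s + 1) / k)
    (hshatter : ∀ B ⊆ S, ∃ e ∈ E, e ∩ S = B) :
    ∃ (X : Finset α) (E' : Finset (Finset α)), X ⊆ V ∧
      (∀ f ∈ E', ∃ e ∈ E, e ∩ X = f) ∧
      (∀ f ∈ E', (k - 1) * ((s + 1) / k) ≤ f.card) ∧
      ¬ ∃ c : α → Fin k, ∀ f ∈ E', ∀ i : Fin k, ∃ v ∈ f, c v = i := by
  have : NeZero k := ⟨by omega⟩
  refine ⟨S, S.powersetCard ((k - 1) * ((s + 1) / k)), hS, ?traces, ?heavy, ?not_polychromatic⟩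
  case traces => exact fun f hf => hshatter f (Finset.mem_powersetCard.1 hf).1
  case heavy => exact fun f hf => (Finset.mem_powersetCard.1 hf).2.ge
  case not_polychromatic =>
    rintro ⟨c, hc⟩
    have hsize : (k - 1) * ((s + 1) / k) ≤ S.card - S.card / Fintype.card (Fin k) := by
      rw [Fintype.card_fin, hScard]
      exact sub_one_mul_succ_div_le_sub_div k s
    obtain ⟨f, hf, i, hne⟩ := exists_mem_powersetCard_forall_ne hsize c
    obtain ⟨v, hv, hvi⟩ := hc f hf i
    exact hne v hv hvi
end

section
/- Let H be a 5-uniform hypergraph on a vertex set V of 8 vertices such that every pair of distinct vertices of V is disjoint from at least one edge of H. Then H has at least 11 edges. -/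
/-!
The complements of the edges in `V` cover every pair of vertices, so they form a covering design
with triples on 8 points, and the Schönheim bound `⌈8/3 · ⌈7/2⌉⌉ = 11` applies. That bound is an
induction on the size of the covered sets: deleting a point `v` from the blocks through it leaves a
covering design on the other points, which bounds the number of blocks through `v` from below, and
double counting incidences turns this into a bound on the number of all blocks.
-/

section CoveringDesign

open Finset

variable {α : Type*} {V : Finset α} {𝓑 : Finset (Finset α)} {k t : ℕ}

/-- A `(#V, k, t)` covering design: the blocks in `𝓑` have at most `k` points each, and every
`t`-subset of `V` lies in one of them. Blocks may have fewer than `k` points, and points outside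
`V`. -/
structure IsCoveringDesign_s9 (V : Finset α) (k t : ℕ) (𝓑 : Finset (Finset α)) : Prop where
  card_le : ∀ b ∈ 𝓑, #b ≤ k
  exists_superset : ∀ T ⊆ V, #T = t → ∃ b ∈ 𝓑, T ⊆ b

section DecidableEq

variable [DecidableEq α]

theorem card_memberSubfamily (v : α) (𝓑 : Finset (Finset α)) :
    #(𝓑.memberSubfamily v) = #{b ∈ 𝓑 | v ∈ b} :=
  card_image_of_injOn fun _ hb _ hc ↦
    erase_injOn' v (mem_filter.mp hb).2 (mem_filter.mp hc).2

theorem card_mul_le_mul_card_of_le_degree {m : ℕ} (hk : ∀ b ∈ 𝓑, #b ≤ k)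
    (hm : ∀ v ∈ V, m ≤ #{b ∈ 𝓑 | v ∈ b}) : #V * m ≤ k * #𝓑 :=
  calc
    #V * m ≤ ∑ b ∈ 𝓑, #(V ∩ b) := le_sum_card_inter hm
    _ ≤ #𝓑 • k :=
      sum_le_card_nsmul _ _ _ fun b hb ↦ (card_le_card inter_subset_right).trans (hk b hb)
    _ = k * #𝓑 := by rw [smul_eq_mul, mul_comm]

theorem IsCoveringDesign_s9.memberSubfamily (h : IsCoveringDesign_s9 V k (t + 1) 𝓑) {v : α}
    (hv : v ∈ V) : IsCoveringDesign_s9 (V.erase v) (k - 1) t (𝓑.memberSubfamily v) where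
  card_le b hb := by
    obtain ⟨hb, hvb⟩ := mem_memberSubfamily.mp hb
    have hcard := h.card_le _ hb
    rw [card_insert_of_notMem hvb] at hcard
    exact Nat.le_sub_one_of_lt hcard
  exists_superset T hT hTcard := by
    obtain ⟨hTV, hvT⟩ := subset_erase.mp hT
    obtain ⟨b, hb, hTb⟩ := h.exists_superset (insert v T) (insert_subset hv hTV)
      (by rw [card_insert_of_notMem hvT, hTcard])
    obtain ⟨hvb, hTb⟩ := insert_subset_iff.mp hTb
    refine ⟨b.erase v, mem_memberSubfamily.mpr ⟨?_, notMem_erase v b⟩, subset_erase.mpr ⟨hTb, hvT⟩⟩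
    rwa [insert_erase hvb]

theorem isCoveringDesign_image_sdiff {E : Finset (Finset α)} (hE : ∀ e ∈ E, #(V \ e) ≤ k)
    (hmiss : ∀ T ⊆ V, #T = t → ∃ e ∈ E, Disjoint e T) :
    IsCoveringDesign_s9 V k t (E.image (V \ ·)) where
  card_le := forall_mem_image.mpr hE
  exists_superset T hT hTcard := by
    obtain ⟨e, he, hdisj⟩ := hmiss T hT hTcard
    exact ⟨V \ e, mem_image_of_mem _ he, subset_sdiff.mpr ⟨hT, hdisj.symm⟩⟩

end DecidableEq

/-- The Schönheim lower bound `⌈n/k ⌈(n-1)/(k-1) ⌈⋯ ⌈(n-t+1)/(k-t+1)⌉ ⋯⌉⌉⌉` for the number of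
blocks of an `(n, k, t)` covering design. For `k < t` it involves a division by zero and is `0`. -/
def schoenheimBound : ℕ → ℕ → ℕ → ℕ
  | _, _, 0 => 1
  | n, k, t + 1 => (n * schoenheimBound (n - 1) (k - 1) t) ⌈/⌉ k

theorem IsCoveringDesign_s9.schoenheimBound_le_card (h : IsCoveringDesign_s9 V k t 𝓑) :
    schoenheimBound #V k t ≤ #𝓑 := by
  classical
  induction t generalizing V k 𝓑 with
  | zero =>
    obtain ⟨b, hb, -⟩ := h.exists_superset ∅ (empty_subset V) card_empty
    exact card_pos.mpr ⟨b, hb⟩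
  | succ t ih =>
    have le_degree (v) (hv : v ∈ V) : schoenheimBound (#V - 1) (k - 1) t ≤ #{b ∈ 𝓑 | v ∈ b} := by
      simpa only [card_memberSubfamily, card_erase_of_mem hv] using ih (h.memberSubfamily hv)
    rw [schoenheimBound]
    obtain rfl | hk := k.eq_zero_or_pos
    · simp only [ceilDiv_zero, zero_le]
    · exact (ceilDiv_le_iff_le_mul hk).mpr (card_mul_le_mul_card_of_le_degree h.card_le le_degree)

theorem stmt_9_general {E : Finset (Finset α)} {r : ℕ} (hE : ∀ e ∈ E, e ⊆ V ∧ r ≤ #e)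
    (hmiss : ∀ T ⊆ V, #T = t → ∃ e ∈ E, Disjoint e T) :
    schoenheimBound #V (#V - r) t ≤ #E := by
  classical
  have card_sdiff_le (e) (he : e ∈ E) : #(V \ e) ≤ #V - r := by
    rw [card_sdiff_of_subset (hE e he).1]
    exact Nat.sub_le_sub_left (hE e he).2 _
  exact (isCoveringDesign_image_sdiff card_sdiff_le hmiss).schoenheimBound_le_card.trans
    card_image_le

end CoveringDesign

/-- A 5-uniform hypergraph on 8 vertices in which every pair of distinct
vertices is disjoint from at least one edge has at least 11 edges. -/
theorem stmt_9 {α : Type*} [DecidableEq α] (V : Finset α) (hV : V.card = 8)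
    (E : Finset (Finset α)) (hE : ∀ e ∈ E, e ⊆ V ∧ e.card = 5)
    (hmiss : ∀ u ∈ V, ∀ v ∈ V, u ≠ v → ∃ e ∈ E, Disjoint e ({u, v} : Finset α)) :
    11 ≤ E.card := by
  have miss_pair (T) (hT : T ⊆ V) (hTcard : T.card = 2) : ∃ e ∈ E, Disjoint e T := by
    obtain ⟨u, v, huv, rfl⟩ := Finset.card_eq_two.mp hTcard
    rw [Finset.insert_subset_iff, Finset.singleton_subset_iff] at hT
    exact hmiss u hT.1 v hT.2 huv
  have bound := stmt_9_general (fun e he ↦ ⟨(hE e he).1, (hE e he).2.ge⟩) miss_pair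
  rwa [hV, show schoenheimBound 8 (8 - 5) 2 = 11 from rfl] at bound
end

section
/- Let H be a 5-uniform hypergraph on a vertex set V of 8 vertices such that every pair of distinct vertices of V is disjoint from at least one edge of H. Then for every vertex v ∈ V there exists a pair {v, w} (w ≠ v) that is disjoint from at least two distinct edges of H. -/
/-! Fix `v` and count in two ways the pairs `(w, e)` such that the edge `e` misses `{v, w}`. In a
`k`-uniform hypergraph on `n` vertices an edge avoiding `v` misses `{v, w}` for exactly `n - k - 1`
vertices `w ≠ v`, so the number of pairs is a multiple of `n - k - 1`. If every `{v, w}` were missed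
exactly once, this number would be `n - 1`; but `2 = 8 - 5 - 1` does not divide `7 = 8 - 1`. -/

section

variable {α : Type*} [DecidableEq α] {V e : Finset α} {E : Finset (Finset α)} {k t : ℕ} {v w : α}

/-- The edges of the hypergraph with edge set `E` that miss the pair `{v, w}`; their number is the
multiplicity with which the pair is missed. -/
def edgesMissing (E : Finset (Finset α)) (v w : α) : Finset (Finset α) :=
  {e ∈ E | Disjoint e {v, w}}

lemma mem_edgesMissing : e ∈ edgesMissing E v w ↔ e ∈ E ∧ Disjoint e {v, w} :=
  Finset.mem_filter

lemma card_filter_disjoint_pair_of_notMem (hv : v ∈ V) (hve : v ∉ e) (heV : e ⊆ V) :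
    {w ∈ V.erase v | Disjoint e {v, w}}.card = V.card - e.card - 1 := by
  have hset : {w ∈ V.erase v | Disjoint e {v, w}} = (V \ e).erase v := by
    ext w
    simp only [Finset.mem_filter, Finset.mem_erase, Finset.mem_sdiff,
      Finset.disjoint_insert_right, Finset.disjoint_singleton_right]
    tauto
  rw [hset, Finset.card_erase_of_mem (Finset.mem_sdiff.mpr ⟨hv, hve⟩),
    Finset.card_sdiff_of_subset heV]

lemma sum_card_edgesMissing (hv : v ∈ V) (hE : ∀ e ∈ E, e ⊆ V ∧ e.card = k) :
    ∑ w ∈ V.erase v, (edgesMissing E v w).card =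
      {e ∈ E | v ∉ e}.card * (V.card - k - 1) := by
  have hcard : ∀ e ∈ E, {w ∈ V.erase v | Disjoint e {v, w}}.card =
      if v ∉ e then V.card - k - 1 else 0 := fun e he ↦ by
    obtain ⟨heV, rfl⟩ := hE e he
    by_cases hve : v ∈ e
    · simp [hve]
    · rw [if_pos hve, card_filter_disjoint_pair_of_notMem hv hve heV]
  calc ∑ w ∈ V.erase v, (edgesMissing E v w).card
      = ∑ e ∈ E, {w ∈ V.erase v | Disjoint e {v, w}}.card := by
        exact Finset.sum_card_bipartiteAbove_eq_sum_card_bipartiteBelow _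
    _ = ∑ e ∈ E, if v ∉ e then V.card - k - 1 else 0 := Finset.sum_congr rfl hcard
    _ = {e ∈ E | v ∉ e}.card * (V.card - k - 1) := by
        rw [← Finset.sum_filter, Finset.sum_const, smul_eq_mul]

lemma dvd_of_forall_card_edgesMissing_eq (hv : v ∈ V) (hE : ∀ e ∈ E, e ⊆ V ∧ e.card = k)
    (ht : ∀ w ∈ V.erase v, (edgesMissing E v w).card = t) :
    V.card - k - 1 ∣ (V.card - 1) * t := by
  have hsum := sum_card_edgesMissing hv hE
  rw [Finset.sum_const_nat ht, Finset.card_erase_of_mem hv] at hsum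
  exact hsum ▸ dvd_mul_left _ _

lemma exists_lt_card_edgesMissing (hv : v ∈ V) (hE : ∀ e ∈ E, e ⊆ V ∧ e.card = k)
    (hdvd : ¬ V.card - k - 1 ∣ (V.card - 1) * t)
    (ht : ∀ w ∈ V.erase v, t ≤ (edgesMissing E v w).card) :
    ∃ w ∈ V.erase v, t < (edgesMissing E v w).card := by
  by_contra! hle
  exact hdvd (dvd_of_forall_card_edgesMissing_eq hv hE fun w hw ↦ (hle w hw).antisymm (ht w hw))

theorem stmt_10_general (hv : v ∈ V) (hE : ∀ e ∈ E, e ⊆ V ∧ e.card = k)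
    (hdvd : ¬ V.card - k - 1 ∣ V.card - 1)
    (hmiss : ∀ w ∈ V, v ≠ w → ∃ e ∈ E, Disjoint e {v, w}) :
    ∃ w ∈ V, w ≠ v ∧ ∃ e₁ ∈ E, ∃ e₂ ∈ E, e₁ ≠ e₂ ∧ Disjoint e₁ {v, w} ∧ Disjoint e₂ {v, w} := by
  have hpos : ∀ w ∈ V.erase v, 1 ≤ (edgesMissing E v w).card := fun w hw ↦ by
    obtain ⟨hwv, hwV⟩ := Finset.mem_erase.mp hw
    obtain ⟨e, he⟩ := hmiss w hwV hwv.symm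
    exact Finset.card_pos.mpr ⟨e, mem_edgesMissing.mpr he⟩
  obtain ⟨w, hw, hcard⟩ := exists_lt_card_edgesMissing hv hE (by rwa [mul_one]) hpos
  obtain ⟨hwv, hwV⟩ := Finset.mem_erase.mp hw
  obtain ⟨e₁, h₁, e₂, h₂, hne⟩ := Finset.one_lt_card.mp hcard
  obtain ⟨he₁, hd₁⟩ := mem_edgesMissing.mp h₁
  obtain ⟨he₂, hd₂⟩ := mem_edgesMissing.mp h₂
  exact ⟨w, hwV, hwv, e₁, he₁, e₂, he₂, hne, hd₁, hd₂⟩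

end

/-- In a 5-uniform hypergraph on 8 vertices in which every pair of distinct
vertices is disjoint from at least one edge, every vertex `v` belongs to some
pair `{v, w}` that is disjoint from at least two distinct edges. -/
theorem stmt_10 {α : Type*} [DecidableEq α] (V : Finset α) (hV : V.card = 8)
    (E : Finset (Finset α)) (hE : ∀ e ∈ E, e ⊆ V ∧ e.card = 5)
    (hmiss : ∀ u ∈ V, ∀ v ∈ V, u ≠ v → ∃ e ∈ E, Disjoint e ({u, v} : Finset α)) :
    ∀ v ∈ V, ∃ w ∈ V, w ≠ v ∧ ∃ e₁ ∈ E, ∃ e₂ ∈ E, e₁ ≠ e₂ ∧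
      Disjoint e₁ ({v, w} : Finset α) ∧ Disjoint e₂ ({v, w} : Finset α) :=
  fun v hv ↦ stmt_10_general hv hE (by norm_num [hV]) (hmiss v hv)
end

section
/- Let H be a 5-uniform hypergraph on a vertex set of 7 vertices. If every 3-heavy restricted subhypergraph of H is 2-colorable, then H admits a polychromatic 3-coloring. In other words, there is no 5-uniform hypergraph on 7 vertices that has no polychromatic 3-coloring while all of its 3-heavy restricted subhypergraphs are 2-colorable. -/
/-!
Delete a set `p` of at most two vertices. Every edge keeps at least three vertices, so the trace
on the remaining vertices is 2-colorable, and the smaller color class of a 2-coloring is a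
transversal disjoint from `p` with at most half of the remaining vertices.

Start from an arbitrary pair: this yields a transversal `q₁` with `|q₁| ≤ 5 / 2`, so `|q₁| ≤ 2`.
Deleting `q₁` instead yields a transversal `q₂` disjoint from `q₁`, with
`|q₁| + |q₂| ≤ (7 + |q₁|) / 2 < 5`. No edge fits into `q₁ ∪ q₂`, so `q₁`, `q₂` and the remaining
vertices are the classes of a polychromatic 3-coloring.
-/

namespace PolychromaticColoring

variable {α : Type*}

/-- The vertices can be colored by `κ` so that every edge in `E` contains every color.
For `κ = Fin 3` this is a polychromatic 3-coloring, for `κ = Bool` it is 2-colorability. -/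
def HasPolychromaticColoring (κ : Type*) (E : Finset (Finset α)) : Prop :=
  ∃ c : α → κ, ∀ e ∈ E, ∀ i, ∃ v ∈ e, c v = i

/-- A transversal (hitting set) of `E`: a set of vertices that meets every edge. -/
def IsTransversal (E : Finset (Finset α)) (q : Finset α) : Prop :=
  ∀ e ∈ E, ∃ v ∈ e, v ∈ q

variable [DecidableEq α]

/-- The edge set of the trace `H[X]` of the hypergraph with edge set `E`. -/
def trace (E : Finset (Finset α)) (X : Finset α) : Finset (Finset α) :=
  E.image (· ∩ X)

variable {E : Finset (Finset α)} {V X p q : Finset α} {r t : ℕ}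

lemma IsTransversal.hasPolychromaticColoring (hp : IsTransversal E p) (hq : IsTransversal E q)
    (hpq : Disjoint p q) (hE : ∀ e ∈ E, ¬ e ⊆ p ∪ q) :
    HasPolychromaticColoring (Fin 3) E := by
  refine ⟨fun v => if v ∈ p then 0 else if v ∈ q then 1 else 2, fun e he i => ?_⟩
  fin_cases i
  · obtain ⟨v, hve, hvp⟩ := hp e he
    exact ⟨v, hve, by simp [hvp]⟩
  · obtain ⟨v, hve, hvq⟩ := hq e he
    exact ⟨v, hve, by simp [hvq, Finset.disjoint_right.1 hpq hvq]⟩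
  · obtain ⟨v, hve, hv⟩ := Finset.not_subset.1 (hE e he)
    rw [Finset.mem_union, not_or] at hv
    exact ⟨v, hve, by simp [hv.1, hv.2]⟩

lemma isTransversal_filter_of_trace {κ : Type*} [DecidableEq κ] {c : α → κ} {i : κ}
    (hc : ∀ f ∈ trace E X, ∃ v ∈ f, c v = i) : IsTransversal E {v ∈ X | c v = i} := by
  intro e he
  obtain ⟨v, hv, hcv⟩ := hc (e ∩ X) (Finset.mem_image_of_mem _ he)
  obtain ⟨hve, hvX⟩ := Finset.mem_inter.1 hv
  exact ⟨v, hve, Finset.mem_filter.2 ⟨hvX, hcv⟩⟩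

lemma exists_isTransversal_two_mul_card_le (h : HasPolychromaticColoring Bool (trace E X)) :
    ∃ q ⊆ X, IsTransversal E q ∧ 2 * q.card ≤ X.card := by
  obtain ⟨c, hc⟩ := h
  have htrans (b : Bool) : IsTransversal E {v ∈ X | c v = b} :=
    isTransversal_filter_of_trace fun f hf => hc f hf b
  have hsum : {v ∈ X | c v = true}.card + {v ∈ X | c v = false}.card = X.card := by
    simpa only [Bool.not_eq_true] using
      Finset.card_filter_add_card_filter_not (s := X) (fun v => c v = true)
  obtain hle | hle := le_total {v ∈ X | c v = true}.card {v ∈ X | c v = false}.card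
  · exact ⟨_, Finset.filter_subset _ _, htrans true, by omega⟩
  · exact ⟨_, Finset.filter_subset _ _, htrans false, by omega⟩

lemma le_card_of_mem_trace_sdiff (hE : ∀ e ∈ E, e ⊆ V ∧ r + t ≤ e.card) (hp : p.card ≤ t) :
    ∀ f ∈ trace E (V \ p), r ≤ f.card := by
  refine Finset.forall_mem_image.2 fun e he => ?_
  obtain ⟨heV, hec⟩ := hE e he
  rw [← Finset.inter_sdiff_assoc, Finset.inter_eq_left.2 heV]
  have := Finset.le_card_sdiff p e
  omega

lemma exists_isTransversal_subset_sdiff (hE : ∀ e ∈ E, e ⊆ V ∧ r + t ≤ e.card)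
    (h2col : ∀ X ⊆ V, (∀ f ∈ trace E X, r ≤ f.card) → HasPolychromaticColoring Bool (trace E X))
    (hpV : p ⊆ V) (hp : p.card ≤ t) :
    ∃ q ⊆ V \ p, IsTransversal E q ∧ 2 * q.card + p.card ≤ V.card := by
  obtain ⟨q, hqp, hq, hcard⟩ := exists_isTransversal_two_mul_card_le <|
    h2col (V \ p) Finset.sdiff_subset (le_card_of_mem_trace_sdiff hE hp)
  have := Finset.card_sdiff_add_card_eq_card hpV
  exact ⟨q, hqp, hq, by omega⟩

lemma exists_isTransversal_card_le (hV : V.card ≤ 3 * t + 1)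
    (hE : ∀ e ∈ E, e ⊆ V ∧ r + t ≤ e.card)
    (h2col : ∀ X ⊆ V, (∀ f ∈ trace E X, r ≤ f.card) → HasPolychromaticColoring Bool (trace E X)) :
    ∃ q ⊆ V, IsTransversal E q ∧ q.card ≤ t := by
  obtain ⟨p, hpV, hp⟩ := Finset.exists_subset_card_eq (min_le_right t V.card)
  obtain ⟨q, hqp, hq, hcard⟩ :=
    exists_isTransversal_subset_sdiff hE h2col hpV (hp.trans_le (min_le_left _ _))
  exact ⟨q, hqp.trans Finset.sdiff_subset, hq, by omega⟩

end PolychromaticColoring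

open PolychromaticColoring in
/-- Here `t` vertices may be deleted from an edge before it becomes too small for `h2col`. The bound
`3 * t + 1` ensures that half of the vertices left after deleting `t` of them are again at most `t`;
the bound `2 * r + t` ensures that the two disjoint transversals together are smaller than an edge.
-/
theorem stmt_11_general {α : Type*} [DecidableEq α] {V : Finset α} {E : Finset (Finset α)}
    {r t : ℕ} (hVt : V.card ≤ 3 * t + 1) (hVr : V.card < 2 * r + t)
    (hE : ∀ e ∈ E, e ⊆ V ∧ r + t ≤ e.card)
    (h2col : ∀ X ⊆ V, (∀ f ∈ trace E X, r ≤ f.card) →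
      HasPolychromaticColoring Bool (trace E X)) :
    HasPolychromaticColoring (Fin 3) E := by
  obtain ⟨p, hpV, hp, hpt⟩ := exists_isTransversal_card_le hVt hE h2col
  obtain ⟨q, hqp, hq, hcard⟩ := exists_isTransversal_subset_sdiff hE h2col hpV hpt
  refine hp.hasPolychromaticColoring hq (Finset.subset_sdiff.1 hqp).2.symm fun e he hsub => ?_
  have hunion : e.card ≤ p.card + q.card :=
    (Finset.card_le_card hsub).trans (Finset.card_union_le p q)
  have := (hE e he).2
  omega

/-- There is no 5-uniform hypergraph on 7 vertices without a polychromatic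
3-coloring all of whose 3-heavy restricted subhypergraphs are 2-colorable:
if every 3-heavy restricted subhypergraph of such a hypergraph is 2-colorable,
then the hypergraph admits a polychromatic 3-coloring. -/
theorem stmt_11 {α : Type*} [DecidableEq α] (V : Finset α) (hV : V.card = 7)
    (E : Finset (Finset α)) (hE : ∀ e ∈ E, e ⊆ V ∧ e.card = 5)
    (h2col : ∀ X ⊆ V, ∀ E' ⊆ E.image (· ∩ X), (∀ f ∈ E', 3 ≤ f.card) →
      ∃ c : α → Bool, ∀ f ∈ E', (∃ v ∈ f, c v = true) ∧ (∃ v ∈ f, c v = false)) :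
    ∃ c : α → Fin 3, ∀ e ∈ E, ∀ i : Fin 3, ∃ v ∈ e, c v = i :=
  stmt_11_general (r := 3) (t := 2) (by omega) (by omega)
    (fun e he => ⟨(hE e he).1, (hE e he).2.ge⟩) fun X hX hheavy =>
      (h2col X hX _ subset_rfl hheavy).imp fun _ hc f hf => (Bool.forall_bool' true).2 (hc f hf)
end
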